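/- arXiv:2203.12901 — 4 statements merged into one kernel-verified Lean document; each statement's English description precedes it below -/
import Mathlib

section
/- With the notation of the context: r_0 = 1, r̃_0 = 0, r_1 = a_1 − b_1, r̃_1 = 1, and for every k ≥ 0 the recursions r_{k+1} = r_k + (a_{k+1} − b_{k+1} − 1) q_k + q_{k−1} and r̃_{k+1} = r̃_k + (a_{k+1} − b_{k+1} − 1) p_k + p_{k−1} hold; consequently, for every k ≥ 0, r_{k+1} = 1 − q_k + Σ_{j=0}^{k} (a_{j+1} − b_{j+1}) q_j and r̃_{k+1} = 1 − p_k + Σ_{j=0}^{k} (a_{j+1} − b_{j+1}) p_j. Moreover, for every k ≥ 0 one has 0 ≤ t_k < q_k, 0 ≤ t̃_k ≤ p_k, 1 ≤ r_k ≤ q_k, and 0 ≤ r̃_k ≤ p_k. -/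
/-!
Both `(q_k)` and `(p_k)` solve the recursion `u_{k+1} = a_{k+1} u_k + u_{k-1}` with
`u_{-1} + u_0 = 1`. Telescoping it gives `u_{k+1} + u_k = 1 + ∑_{j ≤ k} a_{j+1} u_j`
(`add_eq_of_recursion`), from which the closed forms follow. The bounds come from the Markov
conditions on the Ostrowski digits by two-step induction (`digit_sum_add_le`): if `b_{k+1} < a_{k+1}`
the bound at `k` yields the one at `k + 1`, and if `b_{k+1} = a_{k+1}` then `b_k = 0` and the bound at `k - 1`
does. The strict inequality for `q` and the weak one for `p` are the cases `c = u_0 = 1` and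
`c = u_0 = 0` of this lemma.
-/

theorem add_eq_of_recursion (a u : ℕ → ℕ) (hu : ∀ k, u (k + 2) = a (k + 1) * u (k + 1) + u k)
    (k : ℕ) :
    u (k + 1) + u k = u 0 + u 1 + ∑ j ∈ Finset.range k, a (j + 1) * u (j + 1) := by
  induction k with
  | zero => simp [add_comm]
  | succ k ih =>
    rw [Finset.sum_range_succ, hu k]
    omega

/-- Admissible digit sums `∑_{j ≤ k} b_j u_{j-1}` stay below `u_k` by a margin of any `c ≤ u_0`
(indices of `u` are shifted by one). -/
theorem digit_sum_add_le (a b u : ℕ → ℕ) (c : ℕ)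
    (hu : ∀ k, u (k + 2) = a (k + 1) * u (k + 1) + u k) (hc : c ≤ u 1)
    (hb1 : b 1 < a 1) (hble : ∀ k, 2 ≤ k → b k ≤ a k)
    (hbcarry : ∀ k, 1 ≤ k → b (k + 1) = a (k + 1) → b k = 0) (k : ℕ) :
    ∑ j ∈ Finset.range k, b (j + 1) * u (j + 1) + c ≤ u (k + 1) := by
  -- A non-maximal digit propagates the bound by one step.
  have step : ∀ k, b (k + 1) < a (k + 1) →
      ∑ j ∈ Finset.range k, b (j + 1) * u (j + 1) + c ≤ u (k + 1) →
      ∑ j ∈ Finset.range (k + 1), b (j + 1) * u (j + 1) + c ≤ u (k + 2) := by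
    intro k hlt ih
    rw [Finset.sum_range_succ, hu k]
    have h := Nat.mul_le_mul_right (u (k + 1)) (Nat.succ_le_of_lt hlt)
    rw [Nat.succ_mul] at h
    omega
  induction k using Nat.twoStepInduction with
  | zero => simpa using hc
  | one => exact step 0 hb1 (by simpa using hc)
  | more k ih₀ ih₁ =>
    rcases (hble (k + 2) (by omega)).lt_or_eq with hlt | heq
    · exact step (k + 1) hlt ih₁
    · have h0 := hbcarry (k + 1) (by omega) heq
      rw [Finset.sum_range_succ, Finset.sum_range_succ, hu (k + 1), h0]
      simp only [show k + 1 + 1 = k + 2 from rfl, heq]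
      omega

/-- **Lemma 2.1 (recursions and bounds for `r_k`, `r̃_k`, `t_k`, `t̃_k`).**
With `θ = [0; a_1, a_2, …]` irrational in `[0,1)`, convergents `p_k/q_k`, Ostrowski
digits `b_k` of `ρ - θ`, and `t_k = ∑_{j=1}^k b_j q_{j-1}`, `t̃_k = ∑_{j=1}^k b_j p_{j-1}`,
`r_k = q_k - t_k`, `r̃_k = p_k - t̃_k`, one has `r_0 = 1`, `r̃_0 = 0`, `r_1 = a_1 - b_1`,
`r̃_1 = 1`, the recursions `r_{k+1} = r_k + (a_{k+1}-b_{k+1}-1) q_k + q_{k-1}` and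
`r̃_{k+1} = r̃_k + (a_{k+1}-b_{k+1}-1) p_k + p_{k-1}`, the closed forms
`r_{k+1} = 1 - q_k + ∑_{j=0}^k (a_{j+1}-b_{j+1}) q_j`,
`r̃_{k+1} = 1 - p_k + ∑_{j=0}^k (a_{j+1}-b_{j+1}) p_j`, and the bounds
`0 ≤ t_k < q_k`, `0 ≤ t̃_k ≤ p_k`, `1 ≤ r_k ≤ q_k`, `0 ≤ r̃_k ≤ p_k`. -/
theorem recursions_and_bounds_for_rk
    (θ ρ : ℝ)
    (hθ0 : 0 ≤ θ) (hθ1 : θ < 1) (hρ0 : 0 ≤ ρ) (hρ1 : ρ < 1) (hθirr : Irrational θ)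
    -- `a (k+1) = a_{k+1}` are the partial quotients of `θ = [0; a_1, a_2, …]`,
    -- obtained by iterating the Gauss map: `θs k = θ_k`, `θ_0 = θ`.
    (a : ℕ → ℕ) (θs : ℕ → ℝ) (hθs0 : θs 0 = θ)
    (haCF : ∀ k, (a (k + 1) : ℤ) = ⌊1 / θs k⌋)
    (hθsrec : ∀ k, θs (k + 1) = 1 / θs k - (a (k + 1) : ℝ))
    -- convergents, shifted by one: `p (k+1) = p_k`, `q (k+1) = q_k`,
    -- so that `p 0 = p_{-1} = 1`, `q 0 = q_{-1} = 0`.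
    (p q : ℕ → ℕ) (hp0 : p 0 = 1) (hp1 : p 1 = 0) (hq0 : q 0 = 0) (hq1 : q 1 = 1)
    (hprec : ∀ k, p (k + 2) = a (k + 1) * p (k + 1) + p k)
    (hqrec : ∀ k, q (k + 2) = a (k + 1) * q (k + 1) + q k)
    -- `b k = b_k` (`k ≥ 1`) are the Ostrowski digits of `ρ - θ` in base `θ`.
    (b : ℕ → ℕ) (hb1 : b 1 < a 1) (hble : ∀ k, 2 ≤ k → b k ≤ a k)
    (hbcarry : ∀ k, 1 ≤ k → b (k + 1) = a (k + 1) → b k = 0)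
    (hOst : ρ - θ = ∑' k : ℕ, (b (k + 1) : ℝ) * ((q (k + 1) : ℝ) * θ - (p (k + 1) : ℝ)))

    -- `t k = t_k`, `t' k = t̃_k`, `r k = r_k`, `r' k = r̃_k`.
    (t t' : ℕ → ℕ) (r r' : ℕ → ℤ)
    (htdef : ∀ k, t k = ∑ j ∈ Finset.range k, b (j + 1) * q (j + 1))
    (ht'def : ∀ k, t' k = ∑ j ∈ Finset.range k, b (j + 1) * p (j + 1))
    (hrdef : ∀ k, r k = (q (k + 1) : ℤ) - t k)
    (hr'def : ∀ k, r' k = (p (k + 1) : ℤ) - t' k)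

    : r 0 = 1 ∧ r' 0 = 0 ∧ r 1 = (a 1 : ℤ) - b 1 ∧ r' 1 = 1 ∧
      (∀ k, r (k + 1) = r k + ((a (k + 1) : ℤ) - b (k + 1) - 1) * q (k + 1) + q k) ∧
      (∀ k, r' (k + 1) = r' k + ((a (k + 1) : ℤ) - b (k + 1) - 1) * p (k + 1) + p k) ∧
      (∀ k, r (k + 1) = 1 - (q (k + 1) : ℤ) +
        ∑ j ∈ Finset.range (k + 1), ((a (j + 1) : ℤ) - b (j + 1)) * q (j + 1)) ∧
      (∀ k, r' (k + 1) = 1 - (p (k + 1) : ℤ) +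
        ∑ j ∈ Finset.range (k + 1), ((a (j + 1) : ℤ) - b (j + 1)) * p (j + 1)) ∧
      (∀ k, 0 ≤ (t k : ℤ) ∧ (t k : ℤ) < q (k + 1) ∧
        0 ≤ (t' k : ℤ) ∧ (t' k : ℤ) ≤ p (k + 1) ∧
        1 ≤ r k ∧ r k ≤ q (k + 1) ∧ 0 ≤ r' k ∧ r' k ≤ p (k + 1)) := by
  have key : ∀ (u : ℕ → ℕ) (s : ℕ → ℕ) (v : ℕ → ℤ), u 0 + u 1 = 1 →
      (∀ k, u (k + 2) = a (k + 1) * u (k + 1) + u k) →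
      (∀ k, s k = ∑ j ∈ Finset.range k, b (j + 1) * u (j + 1)) →
      (∀ k, v k = (u (k + 1) : ℤ) - s k) →
      (∀ k, v (k + 1) = v k + ((a (k + 1) : ℤ) - b (k + 1) - 1) * u (k + 1) + u k) ∧
      (∀ k, v (k + 1) = 1 - (u (k + 1) : ℤ) +
        ∑ j ∈ Finset.range (k + 1), ((a (j + 1) : ℤ) - b (j + 1)) * u (j + 1)) := by
    intro u s v h01 hu hs hv
    constructor
    · intro k
      rw [hv, hv, hs, hs, Finset.sum_range_succ, hu k]
      push_cast
      ring
    · intro k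
      have h := add_eq_of_recursion a u hu (k + 1)
      rw [h01] at h
      zify at h
      rw [hv, hs]
      simp only [sub_mul, Finset.sum_sub_distrib]
      push_cast
      linarith
  obtain ⟨hr, hrc⟩ := key q t r (by omega) hqrec htdef hrdef
  obtain ⟨hr', hrc'⟩ := key p t' r' (by omega) hprec ht'def hr'def
  refine ⟨?_, ?_, ?_, ?_, hr, hr', hrc, hrc', ?_⟩
  · simp [hrdef, htdef, hq1]
  · simp [hr'def, ht'def, hp1]
  · simp [hrdef, htdef, hqrec, hq0, hq1]
  · simp [hr'def, ht'def, hprec, hp0, hp1]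
  · intro k
    have h1 := digit_sum_add_le a b q 1 hqrec hq1.ge hb1 hble hbcarry k
    have h2 := digit_sum_add_le a b p 0 hprec (Nat.zero_le _) hb1 hble hbcarry k
    rw [← htdef] at h1
    rw [← ht'def] at h2
    rw [hrdef, hr'def]
    omega
end

section
/- With the notation of the context, there exists a real constant C > 0 such that for every k ≥ 0 one has |r_k θ − r̃_k| ≤ C and |t_k θ − t̃_k| ≤ C. -/
/-!
Write `d k = |q k * θ - p k|` in the shifted indexing of the statement. The signs of
`q k * θ - p k` alternate, `d (k + 1) = θs k * d k`, and hence `a (k + 1) * d (k + 1) = d k - d (k + 2)`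
with all `d k` positive. As every digit satisfies `b k ≤ a k`, the difference
`t k * θ - t' k = ∑ b (j + 1) * (q (j + 1) * θ - p (j + 1))` is dominated by the telescoping sum
`∑ (d j - d (j + 2)) ≤ d 0 + d 1 = 1 + θ ≤ 2`. Finally `r k * θ - r' k` is
`(q (k + 1) * θ - p (k + 1)) - (t k * θ - t' k)`, whose first term has size `d (k + 1) ≤ 1`.
-/

/-- The iterates of the Gauss map starting at an irrational number of `(0, 1)` stay irrational
and in `(0, 1)`. -/
theorem gauss_iterate_mem (a : ℕ → ℕ) (θs : ℕ → ℝ)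
    (h0 : 0 ≤ θs 0) (h1 : θs 0 < 1) (hirr : Irrational (θs 0))
    (ha : ∀ k, (a (k + 1) : ℤ) = ⌊1 / θs k⌋)
    (hrec : ∀ k, θs (k + 1) = 1 / θs k - (a (k + 1) : ℝ)) (k : ℕ) :
    Irrational (θs k) ∧ 0 < θs k ∧ θs k < 1 := by
  induction k with
  | zero => exact ⟨hirr, lt_of_le_of_ne h0 hirr.ne_zero.symm, h1⟩
  | succ k ih =>
    have hi : Irrational (θs (k + 1)) := by
      rw [hrec, one_div]
      exact ih.1.inv.sub_natCast _
    have hfl : (a (k + 1) : ℝ) = (⌊1 / θs k⌋ : ℝ) := by exact_mod_cast ha k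
    have hfract : θs (k + 1) = Int.fract (1 / θs k) := by rw [hrec, hfl, Int.fract]
    refine ⟨hi, lt_of_le_of_ne ?_ hi.ne_zero.symm, ?_⟩
    · rw [hfract]; exact Int.fract_nonneg _
    · rw [hfract]; exact Int.fract_lt_one _

/-- Telescoping bound: digits `b j ≤ a j`, weighted by terms `e j` with
`a (j + 1) * |e (j + 1)| = |e j| - |e (j + 2)|`,
have bounded partial sums. -/
theorem abs_digit_sum_le (a b : ℕ → ℕ) (e : ℕ → ℝ) (hba : ∀ j, b (j + 1) ≤ a (j + 1))
    (he : ∀ j, (a (j + 1) : ℝ) * |e (j + 1)| = |e j| - |e (j + 2)|) (k : ℕ) :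
    |∑ j ∈ Finset.range k, (b (j + 1) : ℝ) * e (j + 1)| ≤
      |e 0| + |e 1| - |e k| - |e (k + 1)| := by
  induction k with
  | zero => simp
  | succ k ih =>
    rw [Finset.sum_range_succ]
    have h1 := abs_add_le (∑ j ∈ Finset.range k, (b (j + 1) : ℝ) * e (j + 1))
      ((b (k + 1) : ℝ) * e (k + 1))
    have h2 : |(b (k + 1) : ℝ) * e (k + 1)| ≤ (a (k + 1) : ℝ) * |e (k + 1)| := by
      rw [abs_mul, Nat.abs_cast]
      exact mul_le_mul_of_nonneg_right (by exact_mod_cast hba k) (abs_nonneg _)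
    have h3 := he k
    linarith


/-- **Lemma 2.4: `r_k θ - r̃_k = O(1)` and `t_k θ - t̃_k = O(1)`.**
With the continued fraction and Ostrowski data of the context, there is a constant
`C > 0` such that `|r_k θ - r̃_k| ≤ C` and `|t_k θ - t̃_k| ≤ C` for every `k ≥ 0`. -/
theorem rk_theta_minus_rk_tilde_bounded
    (θ ρ : ℝ)
    (hθ0 : 0 ≤ θ) (hθ1 : θ < 1) (hρ0 : 0 ≤ ρ) (hρ1 : ρ < 1) (hθirr : Irrational θ)
    -- `a (k+1) = a_{k+1}` are the partial quotients of `θ = [0; a_1, a_2, …]`,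
    -- obtained by iterating the Gauss map: `θs k = θ_k`, `θ_0 = θ`.
    (a : ℕ → ℕ) (θs : ℕ → ℝ) (hθs0 : θs 0 = θ)
    (haCF : ∀ k, (a (k + 1) : ℤ) = ⌊1 / θs k⌋)
    (hθsrec : ∀ k, θs (k + 1) = 1 / θs k - (a (k + 1) : ℝ))
    -- convergents, shifted by one: `p (k+1) = p_k`, `q (k+1) = q_k`,
    -- so that `p 0 = p_{-1} = 1`, `q 0 = q_{-1} = 0`.
    (p q : ℕ → ℕ) (hp0 : p 0 = 1) (hp1 : p 1 = 0) (hq0 : q 0 = 0) (hq1 : q 1 = 1)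
    (hprec : ∀ k, p (k + 2) = a (k + 1) * p (k + 1) + p k)
    (hqrec : ∀ k, q (k + 2) = a (k + 1) * q (k + 1) + q k)
    -- `b k = b_k` (`k ≥ 1`) are the Ostrowski digits of `ρ - θ` in base `θ`.
    (b : ℕ → ℕ) (hb1 : b 1 < a 1) (hble : ∀ k, 2 ≤ k → b k ≤ a k)
    (hbcarry : ∀ k, 1 ≤ k → b (k + 1) = a (k + 1) → b k = 0)
    (hOst : ρ - θ = ∑' k : ℕ, (b (k + 1) : ℝ) * ((q (k + 1) : ℝ) * θ - (p (k + 1) : ℝ)))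

    -- `t k = t_k`, `t' k = t̃_k`, `r k = r_k`, `r' k = r̃_k`.
    (t t' : ℕ → ℕ) (r r' : ℕ → ℤ)
    (htdef : ∀ k, t k = ∑ j ∈ Finset.range k, b (j + 1) * q (j + 1))
    (ht'def : ∀ k, t' k = ∑ j ∈ Finset.range k, b (j + 1) * p (j + 1))
    (hrdef : ∀ k, r k = (q (k + 1) : ℤ) - t k)
    (hr'def : ∀ k, r' k = (p (k + 1) : ℤ) - t' k)

    : ∃ C : ℝ, 0 < C ∧ ∀ k,
        |(r k : ℝ) * θ - (r' k : ℝ)| ≤ C ∧ |(t k : ℝ) * θ - (t' k : ℝ)| ≤ C := by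
  have hmem := gauss_iterate_mem a θs (hθs0 ▸ hθ0) (hθs0 ▸ hθ1) (hθs0 ▸ hθirr) haCF hθsrec
  set e : ℕ → ℝ := fun k => (q k : ℝ) * θ - (p k : ℝ) with he
  have he0 : e 0 = -1 := by simp [he, hp0, hq0]
  have he1 : e 1 = θ := by simp [he, hp1, hq1]
  have herec : ∀ k, e (k + 2) = a (k + 1) * e (k + 1) + e k := fun k => by
    simp only [he, hprec, hqrec]; push_cast; ring
  have hstep : ∀ k, e (k + 1) = -θs k * e k := by
    intro k
    induction k with
    | zero => rw [he0, hθs0, zero_add, he1]; ring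
    | succ k ih =>
      have hne := (hmem k).2.1.ne'
      rw [herec, hθsrec, ih]
      field_simp
      ring
  have habs : ∀ k, |e (k + 1)| = θs k * |e k| := fun k => by
    rw [hstep, abs_mul, abs_neg, abs_of_pos (hmem k).2.1]
  have htel : ∀ k, (a (k + 1) : ℝ) * |e (k + 1)| = |e k| - |e (k + 2)| := fun k => by
    have hne := (hmem k).2.1.ne'
    rw [habs (k + 1), habs k, hθsrec]
    field_simp
    ring
  have hle1 : ∀ k, |e k| ≤ 1 := by
    intro k
    induction k with
    | zero => simp [he0]
    | succ k ih =>
      rw [habs]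
      exact mul_le_one₀ (hmem k).2.2.le (abs_nonneg _) ih
  have hba : ∀ j, b (j + 1) ≤ a (j + 1)
    | 0 => hb1.le
    | j + 1 => hble _ (by omega)
  have hsum : ∀ k, (t k : ℝ) * θ - (t' k : ℝ) =
      ∑ j ∈ Finset.range k, (b (j + 1) : ℝ) * e (j + 1) := fun k => by
    rw [htdef, ht'def]
    push_cast
    rw [Finset.sum_mul, ← Finset.sum_sub_distrib]
    exact Finset.sum_congr rfl fun j _ => by simp only [he]; ring
  have ht : ∀ k, |(t k : ℝ) * θ - (t' k : ℝ)| ≤ 2 := fun k => by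
    rw [hsum]
    have h := abs_digit_sum_le a b e hba htel k
    linarith [hle1 0, hle1 1, abs_nonneg (e k), abs_nonneg (e (k + 1))]
  refine ⟨3, by norm_num, fun k => ⟨?_, (ht k).trans (by norm_num)⟩⟩
  have hr : (r k : ℝ) * θ - (r' k : ℝ) = e (k + 1) - ((t k : ℝ) * θ - (t' k : ℝ)) := by
    rw [hrdef, hr'def]
    simp only [he]
    push_cast
    ring
  rw [hr]
  linarith [abs_sub (e (k + 1)) ((t k : ℝ) * θ - (t' k : ℝ)), hle1 (k + 1), ht k]
end

section
/- Let θ be an irrational real number with 0 < θ < 1 and let ρ be a real number with 0 ≤ ρ < 1. Let F(z) = Σ_{n≥1} {nθ + ρ} z^n for |z| < 1, where {·} denotes the fractional part. Then for all integers p and q with q ≠ 0, lim_{r → 1⁻} (1 − r) · F(r · e^{2πi(qθ + p)}) = e^{−2πiqρ} / (2πiq), the limit being taken as the real number r tends to 1 from below. -/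
open Filter

/-!
The sum `(1 - r) F(r e^{2πi(qθ+p)})` is the Abel mean of the bounded sequence
`{nθ+ρ} e^{2πi q n θ} = e^{-2πiqρ} g({nθ+ρ})`, where `g(t) = t e^{2πiqt}` on `[0,1)`.
Since `θ` is irrational, the points `{nθ+ρ}` are equidistributed in the Abel sense, so the Abel
mean of `g({nθ+ρ})` tends to `∫₀¹ t e^{2πiqt} dt = 1/(2πiq)`.

Equidistribution follows Weyl's method: for a character the Abel mean is a geometric series
(`HasAbelMean.fourier`), and the trigonometric polynomials are uniformly dense in the continuous
functions on the circle (`hasAbelMean_of_continuousOn`). The function `g` itself jumps at the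
integers. It is replaced by `(t - t^{m+1}) e^{2πiqt}`, which is continuous on the circle and differs
from `g` by at most `t^{m+1} ≤ t^{m+1} + (1-t)^{m+1}`; the latter is continuous on the circle with
integral `2/(m+2)`, which is arbitrarily small. Both approximations are instances of
`HasAbelMean.of_approx`.
-/

/-! ### Abel means of bounded sequences -/

/-- The bounded sequence `a` (indexed from `0`, with `a n` the coefficient of `x ^ (n + 1)`) has
Abel mean `l`, that is `(1 - x) ∑ a n x ^ (n + 1) → l` as `x → 1⁻`. Boundedness is part of the
definition so that all the series involved converge for `0 < x < 1`. -/
def HasAbelMean (a : ℕ → ℂ) (l : ℂ) : Prop :=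
  (∃ C : ℝ, ∀ n, ‖a n‖ ≤ C) ∧
    Tendsto (fun x : ℝ => ((1 : ℂ) - (x : ℂ)) * ∑' n : ℕ, a n * (x : ℂ) ^ (n + 1))
      (nhdsWithin 1 (Set.Iio 1)) (nhds l)

lemma eventually_mem_Ioo :
    ∀ᶠ x : ℝ in nhdsWithin 1 (Set.Iio 1), x ∈ Set.Ioo (0 : ℝ) 1 :=
  Ioo_mem_nhdsLT one_pos

lemma summable_abel {a : ℕ → ℂ} (ha : ∃ C : ℝ, ∀ n, ‖a n‖ ≤ C) {x : ℝ}
    (hx : x ∈ Set.Ioo (0 : ℝ) 1) : Summable fun n : ℕ => a n * (x : ℂ) ^ (n + 1) := by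
  obtain ⟨C, hC⟩ := ha
  have hs : Summable fun n : ℕ => C * x ^ (n + 1) :=
    (((summable_nat_add_iff 1).2 (summable_geometric_of_lt_one hx.1.le hx.2))).mul_left C
  refine Summable.of_norm_bounded hs fun n => ?_
  rw [norm_mul, norm_pow, Complex.norm_real, Real.norm_of_nonneg hx.1.le]
  exact mul_le_mul_of_nonneg_right (hC n) (pow_nonneg hx.1.le _)

namespace HasAbelMean

lemma add {a b : ℕ → ℂ} {l m : ℂ} (ha : HasAbelMean a l) (hb : HasAbelMean b m) :
    HasAbelMean (fun n => a n + b n) (l + m) := by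
  obtain ⟨C, hC⟩ := ha.1
  obtain ⟨D, hD⟩ := hb.1
  refine ⟨⟨C + D, fun n => (norm_add_le _ _).trans (add_le_add (hC n) (hD n))⟩, ?_⟩
  refine (ha.2.add hb.2).congr' ?_
  filter_upwards [eventually_mem_Ioo] with x hx
  rw [← mul_add, ← (summable_abel ha.1 hx).tsum_add (summable_abel hb.1 hx)]
  simp only [add_mul]

lemma const_mul {a : ℕ → ℂ} {l : ℂ} (c : ℂ) (ha : HasAbelMean a l) :
    HasAbelMean (fun n => c * a n) (c * l) := by
  obtain ⟨C, hC⟩ := ha.1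
  refine ⟨⟨‖c‖ * C, fun n => ?_⟩, ?_⟩
  · rw [norm_mul]
    exact mul_le_mul_of_nonneg_left (hC n) (norm_nonneg _)
  · refine (ha.2.const_mul c).congr fun x => ?_
    simp only [mul_assoc, tsum_mul_left]
    ring

/-- The Abel mean of a geometric sequence `u ^ (n + 1)` on the unit circle with `u ≠ 1` is `0`. -/
lemma geometric {u : ℂ} (hu : ‖u‖ = 1) (hu1 : u ≠ 1) :
    HasAbelMean (fun n => u ^ (n + 1)) 0 := by
  refine ⟨⟨1, fun n => by simp [hu]⟩, ?_⟩
  have h1 : Tendsto (fun x : ℝ => ((1 : ℂ) - (x : ℂ)) * ((u * x) * (1 - u * x)⁻¹))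
      (nhdsWithin 1 (Set.Iio 1)) (nhds 0) := by
    have hc : ContinuousAt (fun x : ℝ => ((1 : ℂ) - (x : ℂ)) * ((u * x) * (1 - u * x)⁻¹)) 1 := by
      have : (1 : ℂ) - u * ((1 : ℝ) : ℂ) ≠ 0 := by
        simpa [sub_eq_zero] using hu1.symm
      fun_prop (disch := assumption)
    have := hc.tendsto
    simp only [Complex.ofReal_one, sub_self, zero_mul] at this
    exact this.mono_left nhdsWithin_le_nhds
  refine h1.congr' ?_
  filter_upwards [eventually_mem_Ioo] with x hx
  have hn : ‖u * (x : ℂ)‖ < 1 := by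
    rw [norm_mul, hu, one_mul, Complex.norm_real, Real.norm_of_nonneg hx.1.le]
    exact hx.2
  simp_rw [← mul_pow, pow_succ']
  rw [tsum_mul_left, tsum_geometric_of_norm_lt_one hn]

lemma one : HasAbelMean (fun _ => 1) 1 := by
  refine ⟨⟨1, fun n => by simp⟩, ?_⟩
  have h1 : Tendsto (fun x : ℝ => (x : ℂ)) (nhdsWithin 1 (Set.Iio 1)) (nhds 1) := by
    have := (Complex.continuous_ofReal.tendsto 1).mono_left
      (nhdsWithin_le_nhds (s := Set.Iio 1))
    simpa using this
  refine h1.congr' ?_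
  filter_upwards [eventually_mem_Ioo] with x hx
  have hn : ‖(x : ℂ)‖ < 1 := by
    rw [Complex.norm_real, Real.norm_of_nonneg hx.1.le]
    exact hx.2
  have h0 : (1 : ℂ) - x ≠ 0 := by
    rw [sub_ne_zero]
    exact_mod_cast hx.2.ne'
  simp only [one_mul, pow_succ']
  rw [tsum_mul_left, tsum_geometric_of_norm_lt_one hn]
  field_simp

/-- A sequence has Abel mean `l` as soon as it can be approximated by sequences `h` with Abel mean
close to `l`, the error being dominated by a sequence `b` with small Abel mean. -/
lemma of_approx {a : ℕ → ℂ} {l : ℂ} (ha : ∃ C : ℝ, ∀ n, ‖a n‖ ≤ C)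
    (H : ∀ ε > 0, ∃ (h : ℕ → ℂ) (lh : ℂ) (b : ℕ → ℝ) (lb : ℂ), HasAbelMean h lh ∧
      HasAbelMean (fun n => (b n : ℂ)) lb ∧ (∀ n, ‖a n - h n‖ ≤ b n) ∧ ‖lh - l‖ < ε ∧ ‖lb‖ < ε) :
    HasAbelMean a l := by
  refine ⟨ha, ?_⟩
  rw [Metric.tendsto_nhds]
  intro ε hε
  obtain ⟨h, lh, b, lb, hh, hb, hab, hl, hlb⟩ := H (ε / 3) (by positivity)
  have e1 := (hh.2.sub_const l).norm.eventually_lt_const hl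
  have e2 := hb.2.norm.eventually_lt_const hlb
  filter_upwards [eventually_mem_Ioo, e1, e2] with x hx e1 e2
  have hsb : Summable fun n => b n * x ^ (n + 1) := by
    have := summable_abel hb.1 hx
    exact_mod_cast this
  have key : ‖((1 : ℂ) - x) * ∑' n : ℕ, a n * (x : ℂ) ^ (n + 1)
      - ((1 : ℂ) - x) * ∑' n : ℕ, h n * (x : ℂ) ^ (n + 1)‖
      ≤ ‖((1 : ℂ) - x) * ∑' n : ℕ, (b n : ℂ) * (x : ℂ) ^ (n + 1)‖ := by
    rw [← mul_sub, ← (summable_abel ha hx).tsum_sub (summable_abel hh.1 hx), norm_mul, norm_mul]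
    refine mul_le_mul_of_nonneg_left ?_ (norm_nonneg _)
    have : ‖∑' n : ℕ, (a n * (x : ℂ) ^ (n + 1) - h n * (x : ℂ) ^ (n + 1))‖
        ≤ ∑' n, b n * x ^ (n + 1) := by
      refine tsum_of_norm_bounded hsb.hasSum fun n => ?_
      rw [← sub_mul, norm_mul, norm_pow, Complex.norm_real, Real.norm_of_nonneg hx.1.le]
      exact mul_le_mul_of_nonneg_right (hab n) (pow_nonneg hx.1.le _)
    refine this.trans ((le_abs_self _).trans (le_of_eq ?_))
    rw [← Real.norm_eq_abs, ← Complex.norm_real]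
    push_cast
    rfl
  rw [dist_eq_norm]
  have := norm_sub_le_norm_sub_add_norm_sub
    (((1 : ℂ) - x) * ∑' n : ℕ, a n * (x : ℂ) ^ (n + 1))
    (((1 : ℂ) - x) * ∑' n : ℕ, h n * (x : ℂ) ^ (n + 1)) l
  linarith

/-- Irrationality of `θ` enters only here: `e^{2πikθ} ≠ 1` for every integer `k ≠ 0`. -/
lemma fourier {θ : ℝ} (hθ : Irrational θ) (ρ : ℝ) (k : ℤ) :
    HasAbelMean (fun n : ℕ => fourier k (((((n : ℝ) + 1) * θ + ρ : ℝ)) : UnitAddCircle))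
      (∫ t in (0 : ℝ)..1, fourier k (t : UnitAddCircle)) := by
  simp only [fourier_coe_apply, Complex.ofReal_one, div_one]
  by_cases hk : k = 0
  · simpa [hk] using one
  have hc : 2 * (Real.pi : ℂ) * Complex.I * k ≠ 0 := by
    simp [Real.pi_ne_zero, hk]
  have hint : (∫ t in (0 : ℝ)..1, Complex.exp (2 * (Real.pi : ℂ) * Complex.I * k * t)) = 0 := by
    rw [integral_exp_mul_complex hc]
    have : Complex.exp (2 * (Real.pi : ℂ) * Complex.I * k) = 1 :=
      Complex.exp_eq_one_iff.2 ⟨k, by ring⟩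
    simp [this]
  have hu : ‖Complex.exp (2 * (Real.pi : ℂ) * Complex.I * k * θ)‖ = 1 := by
    have : 2 * (Real.pi : ℂ) * Complex.I * k * θ = ((2 * Real.pi * k * θ : ℝ) : ℂ) * Complex.I := by
      push_cast; ring
    rw [this, Complex.norm_exp_ofReal_mul_I]
  have hu1 : Complex.exp (2 * (Real.pi : ℂ) * Complex.I * k * θ) ≠ 1 := by
    intro h
    obtain ⟨n, hn⟩ := Complex.exp_eq_one_iff.1 h
    have h2 : (2 * (Real.pi : ℂ) * Complex.I) ≠ 0 := by simp [Real.pi_ne_zero]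
    have h3 : (k : ℂ) * θ = n := mul_left_cancel₀ h2 (by linear_combination hn)
    have h4 : (k : ℝ) * θ = n := by exact_mod_cast h3
    exact (hθ.intCast_mul hk).ne_int n h4
  rw [hint]
  have := (geometric hu hu1).const_mul (Complex.exp (2 * (Real.pi : ℂ) * Complex.I * k * ρ))
  rw [mul_zero] at this
  convert this using 2 with n
  rw [← Complex.exp_nat_mul, ← Complex.exp_add]
  push_cast
  ring_nf

end HasAbelMean

/-! ### Equidistribution of the points `nθ + ρ` -/

lemma hasAbelMean_of_mem_span {θ : ℝ} (hθ : Irrational θ) (ρ : ℝ) (f : C(UnitAddCircle, ℂ))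
    (hf : f ∈ Submodule.span ℂ (Set.range (@fourier 1))) :
    HasAbelMean (fun n : ℕ => f (((((n : ℝ) + 1) * θ + ρ : ℝ)) : UnitAddCircle))
      (∫ t in (0 : ℝ)..1, f (t : UnitAddCircle)) := by
  have hI : ∀ f : C(UnitAddCircle, ℂ),
      IntervalIntegrable (fun t : ℝ => f (t : UnitAddCircle)) MeasureTheory.volume 0 1 := fun f =>
    (f.continuous.comp (AddCircle.continuous_mk' 1)).intervalIntegrable _ _
  induction hf using Submodule.span_induction with
  | mem f hf =>
    obtain ⟨k, rfl⟩ := hf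
    exact HasAbelMean.fourier hθ ρ k
  | zero => simpa using (HasAbelMean.one.const_mul 0)
  | add f g _ _ hf hg =>
    have := hf.add hg
    rw [← intervalIntegral.integral_add (hI f) (hI g)] at this
    exact this
  | smul c f _ hf =>
    have := hf.const_mul c
    rw [← intervalIntegral.integral_const_mul] at this
    exact this

/-- Abel form of Weyl equidistribution, on the circle. -/
lemma hasAbelMean_of_continuous {θ : ℝ} (hθ : Irrational θ) (ρ : ℝ) (f : C(UnitAddCircle, ℂ)) :
    HasAbelMean (fun n : ℕ => f (((((n : ℝ) + 1) * θ + ρ : ℝ)) : UnitAddCircle))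
      (∫ t in (0 : ℝ)..1, f (t : UnitAddCircle)) := by
  have hI : ∀ f : C(UnitAddCircle, ℂ),
      IntervalIntegrable (fun t : ℝ => f (t : UnitAddCircle)) MeasureTheory.volume 0 1 := fun f =>
    (f.continuous.comp (AddCircle.continuous_mk' 1)).intervalIntegrable _ _
  refine HasAbelMean.of_approx ⟨‖f‖, fun n => f.norm_coe_le_norm _⟩ fun ε hε => ?_
  have hmem : f ∈ closure (Submodule.span ℂ (Set.range (@fourier 1)) : Set C(UnitAddCircle, ℂ)) := by
    rw [← Submodule.topologicalClosure_coe, span_fourier_closure_eq_top]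
    trivial
  obtain ⟨g, hg, hfg⟩ := Metric.mem_closure_iff.1 hmem (ε / 2) (by positivity)
  rw [dist_eq_norm] at hfg
  have hp : ∀ y, ‖f y - g y‖ ≤ ε / 2 := fun y =>
    ((f - g).norm_coe_le_norm y).trans hfg.le
  refine ⟨_, _, fun _ => ε / 2, ((ε / 2 : ℝ) : ℂ), hasAbelMean_of_mem_span hθ ρ g hg, ?_,
    fun n => hp _, ?_, ?_⟩
  · simpa using HasAbelMean.one.const_mul ((ε / 2 : ℝ) : ℂ)
  · rw [← intervalIntegral.integral_sub (hI g) (hI f)]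
    have := intervalIntegral.norm_integral_le_of_norm_le_const (a := (0 : ℝ)) (b := 1)
      (f := fun t : ℝ => g (t : UnitAddCircle) - f (t : UnitAddCircle)) (C := ε / 2)
      fun t _ => by rw [norm_sub_rev]; exact hp _
    simp only [sub_zero, abs_one, mul_one] at this
    linarith
  · rw [Complex.norm_real, Real.norm_of_nonneg (by positivity)]
    linarith

/-- Abel form of Weyl equidistribution, for a function on `[0, 1]` with equal values at the end
points. -/
lemma hasAbelMean_of_continuousOn {θ : ℝ} (hθ : Irrational θ) (ρ : ℝ) {f : ℝ → ℂ}
    (hf : ContinuousOn f (Set.Icc 0 1)) (h01 : f 0 = f 1) :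
    HasAbelMean (fun n : ℕ => f (Int.fract (((n : ℝ) + 1) * θ + ρ)))
      (∫ t in (0 : ℝ)..1, f t) := by
  have hlift : ∀ t ∈ Set.Ico (0 : ℝ) 1, AddCircle.liftIco 1 0 f (t : UnitAddCircle) = f t :=
    fun t ht => AddCircle.liftIco_zero_coe_apply ht
  have := hasAbelMean_of_continuous hθ ρ
    ⟨AddCircle.liftIco 1 0 f, AddCircle.liftIco_zero_continuous h01 hf⟩
  simp only [ContinuousMap.coe_mk] at this
  convert this using 1
  · funext n
    rw [← hlift _ ⟨Int.fract_nonneg _, Int.fract_lt_one _⟩]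
    congr 1
    rw [← sub_eq_zero, ← AddCircle.coe_sub, AddCircle.coe_eq_zero_iff]
    exact ⟨-⌊((n : ℝ) + 1) * θ + ρ⌋, by
      rw [← Int.self_sub_floor]; push_cast [zsmul_eq_mul]; ring⟩
    -- The lift may differ from `f` only at the end point `1`, so both sides are compared on `(0, 1)`.
  · rw [intervalIntegral.integral_of_le zero_le_one, intervalIntegral.integral_of_le zero_le_one,
      MeasureTheory.integral_Ioc_eq_integral_Ioo, MeasureTheory.integral_Ioc_eq_integral_Ioo]
    exact MeasureTheory.setIntegral_congr_fun measurableSet_Ioo fun t ht =>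
      (hlift t ⟨ht.1.le, ht.2⟩).symm

/-! ### The sawtooth function times a character -/

lemma integral_mul_exp {c : ℂ} (hc : c ≠ 0) (hc1 : Complex.exp c = 1) :
    (∫ t in (0 : ℝ)..1, (t : ℂ) * Complex.exp (c * t)) = 1 / c := by
  have hd : ∀ t : ℝ, HasDerivAt
      (fun t : ℝ => (t : ℂ) * Complex.exp (c * t) / c - Complex.exp (c * t) / c ^ 2)
      ((t : ℂ) * Complex.exp (c * t)) t := by
    intro t
    have hi : HasDerivAt (fun t : ℝ => (t : ℂ)) 1 t := Complex.ofRealCLM.hasDerivAt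
    have he := (hi.const_mul c).cexp
    convert! ((hi.mul he).div_const c).sub (he.div_const (c ^ 2)) using 1
    field_simp
    ring
  rw [intervalIntegral.integral_eq_sub_of_hasDerivAt (fun t _ => hd t)
    (Continuous.intervalIntegrable (by fun_prop) _ _)]
  simp [hc1]

/-- Equidistribution applied to the discontinuous function `t ↦ t e^{2πiqt}` on `[0, 1)`. -/
lemma hasAbelMean_fract_mul_exp {θ : ℝ} (hθ : Irrational θ) (ρ : ℝ) {Q : ℤ} (hQ : Q ≠ 0) :
    HasAbelMean (fun n : ℕ => ((Int.fract (((n : ℝ) + 1) * θ + ρ) : ℝ) : ℂ) *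
        Complex.exp (2 * (Real.pi : ℂ) * Complex.I * Q * (Int.fract (((n : ℝ) + 1) * θ + ρ) : ℝ)))
      (1 / (2 * (Real.pi : ℂ) * Complex.I * Q)) := by
  have hn : ∀ t : ℝ, ‖Complex.exp (2 * (Real.pi : ℂ) * Complex.I * Q * t)‖ = 1 := fun t => by
    have : 2 * (Real.pi : ℂ) * Complex.I * Q * t = ((2 * Real.pi * Q * t : ℝ) : ℂ) * Complex.I := by
      push_cast; ring
    rw [this, Complex.norm_exp_ofReal_mul_I]
  have hc : 2 * (Real.pi : ℂ) * Complex.I * Q ≠ 0 := by simp [Real.pi_ne_zero, hQ]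
  have hc1 : Complex.exp (2 * (Real.pi : ℂ) * Complex.I * Q) = 1 :=
    Complex.exp_eq_one_iff.2 ⟨Q, by ring⟩
  rw [← integral_mul_exp hc hc1]
  set c : ℂ := 2 * (Real.pi : ℂ) * Complex.I * Q
  have hpow : ∀ m : ℕ, ∫ t in (0 : ℝ)..1, t ^ (m + 1) = 1 / ((m : ℝ) + 2) := fun m => by
    rw [integral_pow]
    push_cast
    norm_num
    ring
  refine HasAbelMean.of_approx ⟨1, fun n => ?_⟩ fun ε hε => ?_
  · rw [norm_mul, hn, mul_one, Complex.norm_real, Real.norm_of_nonneg (Int.fract_nonneg _)]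
    exact (Int.fract_lt_one _).le
  obtain ⟨m, hm⟩ := exists_nat_one_div_lt (half_pos hε)
  have hm2 : 2 / ((m : ℝ) + 2) < ε := by
    rw [div_lt_iff₀ (by positivity)] at hm ⊢
    linarith
  have hm1 : 1 / ((m : ℝ) + 2) < ε := lt_of_le_of_lt (by gcongr; norm_num) hm2
  refine ⟨_, _, fun n => Int.fract (((n : ℝ) + 1) * θ + ρ) ^ (m + 1) +
      (1 - Int.fract (((n : ℝ) + 1) * θ + ρ)) ^ (m + 1), _,
    hasAbelMean_of_continuousOn hθ ρ
      (f := fun t : ℝ => ((t : ℂ) - (t : ℂ) ^ (m + 1)) * Complex.exp (c * t))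
      (by fun_prop) (by simp),
    hasAbelMean_of_continuousOn hθ ρ
      (f := fun t : ℝ => ((t ^ (m + 1) + (1 - t) ^ (m + 1) : ℝ) : ℂ))
      (by fun_prop) (by simp), fun n => ?_, ?_, ?_⟩
  · set y := Int.fract (((n : ℝ) + 1) * θ + ρ)
    have h0 : 0 ≤ y := Int.fract_nonneg _
    have h1 : 0 ≤ 1 - y := sub_nonneg.2 (Int.fract_lt_one _).le
    rw [← sub_mul, norm_mul, hn, mul_one, sub_sub_cancel, norm_pow, Complex.norm_real,
      Real.norm_of_nonneg h0]
    exact le_add_of_nonneg_right (pow_nonneg h1 _)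
  · rw [← intervalIntegral.integral_sub (Continuous.intervalIntegrable (by fun_prop) _ _)
      (Continuous.intervalIntegrable (by fun_prop) _ _)]
    refine lt_of_le_of_lt ?_ hm1
    rw [← hpow m]
    refine intervalIntegral.norm_integral_le_of_norm_le zero_le_one ?_
      (Continuous.intervalIntegrable (by fun_prop) _ _)
    refine Eventually.of_forall fun t ht => ?_
    rw [← sub_mul, norm_mul, hn, mul_one, sub_sub_cancel_left, norm_neg, norm_pow,
      Complex.norm_real, Real.norm_of_nonneg ht.1.le]
  · rw [intervalIntegral.integral_ofReal, Complex.norm_real,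
      intervalIntegral.integral_add (Continuous.intervalIntegrable (by fun_prop) _ _)
      (Continuous.intervalIntegrable (by fun_prop) _ _),
      intervalIntegral.integral_comp_sub_left (fun t : ℝ => t ^ (m + 1)) 1]
    simp only [sub_self, sub_zero]
    rw [hpow m, Real.norm_of_nonneg (by positivity)]
    refine lt_of_eq_of_lt ?_ hm2
    ring

/-- **Hecke's radial limit (from the proof of Proposition 6.1).**
Let `θ` be irrational with `0 < θ < 1`, let `0 ≤ ρ < 1`, and set
`F(z) = ∑_{n ≥ 1} {nθ+ρ} z^n` for `|z| < 1`.  Then, for all integers `p, q` with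
`q ≠ 0`, `(1-r)·F(r e^{2πi(qθ+p)}) → e^{-2πiqρ}/(2πiq)` as `r → 1⁻`. -/
theorem hecke_radial_limit
    (θ ρ : ℝ) (hθ0 : 0 < θ) (hθ1 : θ < 1) (hρ0 : 0 ≤ ρ) (hρ1 : ρ < 1)
    (hθirr : Irrational θ) :
    ∀ P Q : ℤ, Q ≠ 0 →
      Tendsto (fun x : ℝ => ((1 : ℂ) - (x : ℂ)) *
          ∑' n : ℕ, ((Int.fract (((n : ℝ) + 1) * θ + ρ) : ℝ) : ℂ) *
            ((x : ℂ) * Complex.exp (2 * (Real.pi : ℂ) * Complex.I *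
              ((Q : ℂ) * (θ : ℂ) + (P : ℂ)))) ^ (n + 1))
        (nhdsWithin 1 (Set.Iio 1))
        (nhds (Complex.exp (-(2 * (Real.pi : ℂ) * Complex.I * (Q : ℂ) * (ρ : ℂ))) /
          (2 * (Real.pi : ℂ) * Complex.I * (Q : ℂ)))) := by
  intro P Q hQ
  have h := ((hasAbelMean_fract_mul_exp hθirr ρ hQ).const_mul
    (Complex.exp (-(2 * (Real.pi : ℂ) * Complex.I * (Q : ℂ) * (ρ : ℂ))))).2
  rw [mul_one_div] at h
  refine h.congr fun x => ?_
  congr 1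
  refine tsum_congr fun n => ?_
  -- The exponents differ by `2πi` times the integer `(n + 1) P + Q ⌊(n + 1) θ + ρ⌋`.
  have key : Complex.exp (2 * (Real.pi : ℂ) * Complex.I * ((Q : ℂ) * (θ : ℂ) + (P : ℂ))) ^ (n + 1)
      = Complex.exp (-(2 * (Real.pi : ℂ) * Complex.I * (Q : ℂ) * (ρ : ℂ))) *
        Complex.exp (2 * (Real.pi : ℂ) * Complex.I * Q *
          (Int.fract (((n : ℝ) + 1) * θ + ρ) : ℝ)) := by
    rw [← Complex.exp_nat_mul, ← Complex.exp_add, Complex.exp_eq_exp_iff_exists_int]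
    refine ⟨(n + 1) * P + Q * ⌊((n : ℝ) + 1) * θ + ρ⌋, ?_⟩
    simp only [Int.fract]
    push_cast
    ring
  rw [mul_pow, key]
  ring
end

section
/- Let θ be an irrational real number with 0 < θ < 1 and let ρ be a real number with 0 ≤ ρ < 1. Then for all integers p and q with q ≠ 0, lim_{t → ∞} (1/t) · Σ_{n=1}^{t} {nθ + ρ} e^{2πin(qθ + p)} = e^{−2πiqρ} / (2πiq), where {·} denotes the fractional part and the limit is over positive integers t. -/
open Filter

/-!
The proof is Weyl's equidistribution argument on the circle `𝕋 = ℝ / ℤ`.  Writing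
`xₙ = nθ + ρ ∈ 𝕋`, the summand is `e^{-2πiQρ} · {xₙ} · e^{2πiQxₙ}`, so the limit should be
`e^{-2πiQρ} ∫₀¹ x e^{2πiQx} dx = e^{-2πiQρ} / (2πiQ)`.

* For a nontrivial character the orbit sums are geometric, hence bounded, because `θ` is
  irrational; so the averages tend to `0` (`orbitAvg_fourier`).  By density of trigonometric
  polynomials in `C(𝕋, ℂ)`, averages of continuous functions tend to their Haar integral
  (`orbitAvg_continuousMap`).
* The function `{x} e^{2πiQx}` jumps at `0`.  Multiplying by `1 - tent N`, where `tent N` is a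
  continuous bump of width `1 / N` at `0`, makes it continuous, at a cost controlled by the average
  and the integral of `tent N`, which are both small (`orbitAvg_of_continuousAt`).
* Since `{x} = B₁({x}) + 1/2`, the integral is a known Fourier coefficient of the periodized first
  Bernoulli polynomial, the constant `1/2` contributing nothing as `Q ≠ 0`.
-/

open AddCircle MeasureTheory Topology

namespace WeylAverage

/-! ### Orbit averages -/

/-- The average of `f` over the points `nθ + ρ`, `1 ≤ n ≤ T`, of the circle `ℝ / ℤ`
(equal to `0` when `T = 0`). -/
noncomputable def orbitAvg (θ ρ : ℝ) (f : UnitAddCircle → ℂ) (T : ℕ) : ℂ :=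
  (1 / (T : ℂ)) * ∑ n ∈ Finset.Icc 1 T, f (((n : ℝ) * θ + ρ : ℝ) : UnitAddCircle)

/-- Limits pass to approximations: it is enough to be eventually `ε`-close to convergent
sequences with `ε`-close limits. -/
lemma tendsto_of_approx {u : ℕ → ℂ} {l : ℂ}
    (h : ∀ ε > 0, ∃ (v : ℕ → ℂ) (m : ℂ), Tendsto v atTop (𝓝 m) ∧
      (∀ᶠ T in atTop, ‖u T - v T‖ ≤ ε) ∧ ‖l - m‖ ≤ ε) :
    Tendsto u atTop (𝓝 l) := by
  rw [Metric.tendsto_nhds]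
  intro ε hε
  obtain ⟨v, m, hv, huv, hlm⟩ := h (ε / 4) (by positivity)
  filter_upwards [huv, Metric.tendsto_nhds.1 hv (ε / 4) (by positivity)] with T h1 h2
  rw [dist_eq_norm] at h2 ⊢
  have h3 : u T - l = (u T - v T) + (v T - m) - (l - m) := by ring
  rw [h3]
  have h4 := norm_sub_le ((u T - v T) + (v T - m)) (l - m)
  have h5 := norm_add_le (u T - v T) (v T - m)
  linarith

lemma orbitAvg_add (θ ρ : ℝ) (f g : UnitAddCircle → ℂ) (T : ℕ) :
    orbitAvg θ ρ (fun x => f x + g x) T = orbitAvg θ ρ f T + orbitAvg θ ρ g T := by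
  simp only [orbitAvg, Finset.sum_add_distrib, mul_add]

lemma orbitAvg_sub (θ ρ : ℝ) (f g : UnitAddCircle → ℂ) (T : ℕ) :
    orbitAvg θ ρ (fun x => f x - g x) T = orbitAvg θ ρ f T - orbitAvg θ ρ g T := by
  simp only [orbitAvg, Finset.sum_sub_distrib, mul_sub]

lemma orbitAvg_const_mul (θ ρ : ℝ) (c : ℂ) (f : UnitAddCircle → ℂ) (T : ℕ) :
    orbitAvg θ ρ (fun x => c * f x) T = c * orbitAvg θ ρ f T := by
  simp only [orbitAvg, ← Finset.mul_sum]
  ring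

lemma norm_orbitAvg_le (θ ρ : ℝ) {f : UnitAddCircle → ℂ} {g : UnitAddCircle → ℝ}
    (hfg : ∀ x, ‖f x‖ ≤ g x) (T : ℕ) :
    ‖orbitAvg θ ρ f T‖ ≤ ‖orbitAvg θ ρ (fun x => (g x : ℂ)) T‖ := by
  simp only [orbitAvg, norm_mul]
  gcongr
  rw [← Complex.ofReal_sum, Complex.norm_real]
  exact (norm_sum_le_of_le _ fun n _ => hfg _).trans (le_abs_self _)

lemma orbitAvg_one (θ ρ : ℝ) {T : ℕ} (hT : T ≠ 0) : orbitAvg θ ρ (fun _ => 1) T = 1 := by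
  have : (T : ℂ) ≠ 0 := by exact_mod_cast hT
  simp [orbitAvg, this]

lemma norm_orbitAvg_le_const (θ ρ : ℝ) {f : UnitAddCircle → ℂ} {c : ℝ} (hc : 0 ≤ c)
    (hf : ∀ x, ‖f x‖ ≤ c) (T : ℕ) : ‖orbitAvg θ ρ f T‖ ≤ c := by
  rcases eq_or_ne T 0 with rfl | hT
  · simpa [orbitAvg] using hc
  · have h := norm_orbitAvg_le θ ρ (g := fun _ => c) hf T
    have h2 := orbitAvg_const_mul θ ρ (c : ℂ) (fun _ => 1) T
    rw [orbitAvg_one θ ρ hT] at h2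
    simp only [mul_one] at h2
    rw [h2, Complex.norm_real, Real.norm_of_nonneg hc] at h
    exact h

/-! ### Equidistribution for characters and continuous functions -/

lemma fourier_ne_one {θ : ℝ} (hθ : Irrational θ) {k : ℤ} (hk : k ≠ 0) :
    fourier k (θ : UnitAddCircle) ≠ 1 := by
  rw [fourier_coe_apply]
  intro h
  rw [Complex.exp_eq_one_iff] at h
  obtain ⟨n, hn⟩ := h
  have hpi : (2 * (Real.pi : ℂ) * Complex.I) ≠ 0 := Complex.two_pi_I_ne_zero
  have h2 : (k : ℂ) * (θ : ℂ) = n := by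
    apply mul_left_cancel₀ hpi
    rw [mul_comm _ (n : ℂ), ← hn]
    push_cast
    ring
  have h3 : (k : ℝ) * θ = n := by exact_mod_cast h2
  exact (hθ.intCast_mul hk).ne_int n h3

/-- Weyl's criterion computation: the orbit sums of a nontrivial character are geometric sums with
ratio `≠ 1`, hence bounded. -/
lemma orbitAvg_fourier {θ : ℝ} (ρ : ℝ) (hθ : Irrational θ) {k : ℤ} (hk : k ≠ 0) :
    Tendsto (orbitAvg θ ρ (fourier k)) atTop (𝓝 0) := by
  set z : ℂ := fourier k (θ : UnitAddCircle) with hz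
  set w : ℂ := fourier k (ρ : UnitAddCircle) with hw
  have hz1 : z - 1 ≠ 0 := sub_ne_zero.2 (fourier_ne_one hθ hk)
  have hterm : ∀ n : ℕ, fourier k (((n : ℝ) * θ + ρ : ℝ) : UnitAddCircle) = z ^ n * w := by
    intro n
    rw [hz, hw]
    simp only [fourier_coe_apply]
    rw [← Complex.exp_nat_mul, ← Complex.exp_add]
    push_cast
    ring_nf
  have hsum : ∀ T : ℕ, ∑ n ∈ Finset.Icc 1 T, z ^ n * w = (z ^ T - 1) * (z * w / (z - 1)) := by
    intro T
    induction T with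
    | zero => simp
    | succ T ih =>
      rw [Finset.sum_Icc_succ_top (by omega), ih]
      field_simp
      ring
  have hznorm : ‖z‖ = 1 := by
    rw [hz, fourier_apply]
    exact Circle.norm_coe _
  rw [tendsto_zero_iff_norm_tendsto_zero]
  have hlim : Tendsto (fun T : ℕ => 2 * ‖z * w / (z - 1)‖ / (T : ℝ)) atTop (𝓝 0) :=
    tendsto_const_div_atTop_nhds_zero_nat _
  refine squeeze_zero (fun _ => norm_nonneg _) (fun T => ?_) hlim
  simp only [orbitAvg, hterm, hsum, norm_mul, norm_div, norm_one, Complex.norm_natCast]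
  have h2 : ‖z ^ T - 1‖ ≤ 2 := by
    refine (norm_sub_le _ _).trans ?_
    rw [norm_pow, hznorm]
    norm_num
  rw [div_mul_eq_mul_div, one_mul]
  gcongr

lemma orbitAvg_fourier_integral {θ : ℝ} (ρ : ℝ) (hθ : Irrational θ) (k : ℤ) :
    Tendsto (orbitAvg θ ρ (fourier k)) atTop
      (𝓝 (∫ x : UnitAddCircle, fourier k x ∂haarAddCircle)) := by
  have h := congrFun (fourierCoeff_fourier (T := 1) k) 0
  simp only [fourierCoeff, neg_zero, fourier_zero, one_smul] at h
  rw [h]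
  rcases eq_or_ne k 0 with rfl | hk
  · simp only [Pi.single_eq_same]
    refine tendsto_const_nhds.congr' ?_
    filter_upwards [eventually_ne_atTop 0] with T hT
    have : ((fourier 0 : C(UnitAddCircle, ℂ)) : UnitAddCircle → ℂ) = fun _ => 1 := by
      funext x
      exact fourier_zero
    rw [this, orbitAvg_one θ ρ hT]
  · rw [Pi.single_eq_of_ne (Ne.symm hk)]
    exact orbitAvg_fourier ρ hθ hk

lemma integrable_continuousMap (f : C(UnitAddCircle, ℂ)) : Integrable f haarAddCircle :=
  f.continuous.integrable_of_hasCompactSupport (HasCompactSupport.of_compactSpace _)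

/-- Equidistribution of `nθ + ρ` modulo `1`, tested against continuous functions. -/
lemma orbitAvg_continuousMap {θ : ℝ} (ρ : ℝ) (hθ : Irrational θ) (f : C(UnitAddCircle, ℂ)) :
    Tendsto (orbitAvg θ ρ f) atTop (𝓝 (∫ x, f x ∂haarAddCircle)) := by
  have hspan : ∀ g ∈ Submodule.span ℂ (Set.range (@fourier 1)),
      Tendsto (orbitAvg θ ρ g) atTop (𝓝 (∫ x, g x ∂haarAddCircle)) := by
    intro g hg
    induction hg using Submodule.span_induction with
    | mem g hg =>
      obtain ⟨k, rfl⟩ := hg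
      exact orbitAvg_fourier_integral ρ hθ k
    | zero =>
      have h0 : orbitAvg θ ρ (0 : C(UnitAddCircle, ℂ)) = fun _ => 0 := by
        funext T
        simp [orbitAvg]
      rw [h0]
      simp
    | add g₁ g₂ _ _ h₁ h₂ =>
      simp only [ContinuousMap.add_apply]
      rw [integral_add (integrable_continuousMap _) (integrable_continuousMap _)]
      exact (h₁.add h₂).congr fun T => (orbitAvg_add θ ρ g₁ g₂ T).symm
    | smul c g _ h =>
      simp only [ContinuousMap.smul_apply, smul_eq_mul]
      rw [integral_const_mul]
      exact (h.const_mul c).congr fun T => (orbitAvg_const_mul θ ρ c g T).symm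
  refine tendsto_of_approx fun ε hε => ?_
  have hf : f ∈ closure
      ((Submodule.span ℂ (Set.range (@fourier 1)) : Submodule ℂ C(UnitAddCircle, ℂ)) :
        Set C(UnitAddCircle, ℂ)) := by
    rw [← Submodule.topologicalClosure_coe, span_fourier_closure_eq_top]
    trivial
  obtain ⟨g, hg, hfg⟩ := Metric.mem_closure_iff.1 hf ε hε
  have hpt : ∀ x, ‖f x - g x‖ ≤ ε := fun x => by
    rw [← dist_eq_norm]
    exact (ContinuousMap.dist_apply_le_dist x).trans hfg.le
  refine ⟨_, _, hspan g hg, Eventually.of_forall fun T => ?_, ?_⟩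
  · rw [← orbitAvg_sub]
    exact norm_orbitAvg_le_const θ ρ hε.le hpt T
  · rw [← integral_sub (integrable_continuousMap _) (integrable_continuousMap _)]
    refine (norm_integral_le_of_norm_le_const (Eventually.of_forall hpt)).trans ?_
    simp

/-! ### Functions with a jump at `0` -/

/-- The continuous bump of height `1` at the point `0` of the circle, supported in the ball of
radius `1 / N`. -/
noncomputable def tent (N : ℕ) (x : UnitAddCircle) : ℝ := max 0 (1 - N * ‖x‖)

lemma continuous_tent (N : ℕ) : Continuous (tent N) := by
  unfold tent
  fun_prop

lemma tent_zero (N : ℕ) : tent N 0 = 1 := by simp [tent]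

lemma tent_nonneg (N : ℕ) (x : UnitAddCircle) : 0 ≤ tent N x := le_max_left _ _

lemma tent_le_one (N : ℕ) (x : UnitAddCircle) : tent N x ≤ 1 :=
  max_le zero_le_one (sub_le_self _ (by positivity))

/-- Haar measure on the circle has no atom at `0`, so the integrals of the shrinking bumps tend to
`0` by dominated convergence. -/
lemma tendsto_integral_tent :
    Tendsto (fun N => ∫ x, tent N x ∂haarAddCircle) atTop (𝓝 0) := by
  have h0 : (haarAddCircle : Measure UnitAddCircle) {0} = 0 := by
    have h1 := AddCircle.volume_closedBall (T := 1) (x := 0) 0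
    rw [Metric.closedBall_zero, volume_eq_smul_haarAddCircle] at h1
    simpa using h1
  have h := tendsto_integral_of_dominated_convergence (μ := haarAddCircle) (F := tent)
    (f := fun _ => (0 : ℝ)) (fun _ => 1) (fun N => (continuous_tent N).aestronglyMeasurable)
    (integrable_const _)
    (fun N => Eventually.of_forall fun x => by
      rw [Real.norm_of_nonneg (tent_nonneg N x)]
      exact tent_le_one N x) ?_
  · simpa using h
  · have hne : ∀ᵐ x ∂(haarAddCircle : Measure UnitAddCircle), x ≠ 0 :=
      measure_eq_zero_iff_ae_notMem.1 h0
    filter_upwards [hne] with x hx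
    have hx' : 0 < ‖x‖ := norm_pos_iff.2 hx
    refine tendsto_const_nhds.congr' ?_
    have hlim : Tendsto (fun N : ℕ => (N : ℝ) * ‖x‖) atTop atTop :=
      tendsto_natCast_atTop_atTop.atTop_mul_const hx'
    filter_upwards [hlim.eventually_ge_atTop 1] with N hN
    exact (max_eq_left (by linarith)).symm

/-- Equidistribution tested against bounded functions that may jump at `0`. -/
lemma orbitAvg_of_continuousAt {θ : ℝ} (ρ : ℝ) (hθ : Irrational θ) {f : UnitAddCircle → ℂ}
    (hf : ∀ x, ‖f x‖ ≤ 1) (hc : ∀ x ≠ 0, ContinuousAt f x) :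
    Tendsto (orbitAvg θ ρ f) atTop (𝓝 (∫ x, f x ∂haarAddCircle)) := by
  have hmeas : Measurable f := measurable_of_continuousOn_compl_singleton 0
    fun x hx => (hc x hx).continuousWithinAt
  have hint : Integrable f haarAddCircle :=
    Integrable.of_bound hmeas.aestronglyMeasurable 1 (Eventually.of_forall hf)
  refine tendsto_of_approx fun ε hε => ?_
  obtain ⟨N, hN⟩ := (tendsto_integral_tent.eventually (gt_mem_nhds hε)).exists
  have htc : Continuous fun x => (tent N x : ℂ) :=
    Complex.continuous_ofReal.comp (continuous_tent N)
  have hle : ∀ x, ‖f x * (tent N x : ℂ)‖ ≤ tent N x := fun x => by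
    rw [norm_mul, Complex.norm_real, Real.norm_of_nonneg (tent_nonneg N x)]
    exact mul_le_of_le_one_left (tent_nonneg N x) (hf x)
  have hgc : Continuous fun x => f x * (1 - (tent N x : ℂ)) := by
    rw [continuous_iff_continuousAt]
    intro x
    rcases eq_or_ne x 0 with rfl | hx
    -- At `0` the second factor vanishes and `f` is bounded.
    · rw [ContinuousAt, tent_zero]
      simp only [Complex.ofReal_one, sub_self, mul_zero]
      have h1 : Tendsto (fun x => ‖1 - (tent N x : ℂ)‖) (𝓝 0) (𝓝 0) := by
        have h2 := (continuous_const (y := (1 : ℂ)).sub htc).norm.tendsto 0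
        simpa [tent_zero] using h2
      refine squeeze_zero_norm (fun x => ?_) h1
      rw [norm_mul]
      exact mul_le_of_le_one_left (norm_nonneg _) (hf x)
    · exact (hc x hx).mul (continuous_const.sub htc).continuousAt
  have hdiff : ∀ x, f x - f x * (1 - (tent N x : ℂ)) = f x * (tent N x : ℂ) := fun x => by ring
  have htlim := (orbitAvg_continuousMap ρ hθ ⟨_, htc⟩).norm
  simp only [ContinuousMap.coe_mk] at htlim
  rw [integral_complex_ofReal, Complex.norm_real,
    Real.norm_of_nonneg (integral_nonneg (tent_nonneg N))] at htlim
  refine ⟨_, _, orbitAvg_continuousMap ρ hθ ⟨_, hgc⟩, ?_, ?_⟩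
  · filter_upwards [htlim.eventually (gt_mem_nhds hN)] with T hT
    simp only [ContinuousMap.coe_mk]
    rw [← orbitAvg_sub]
    simp only [hdiff]
    exact (norm_orbitAvg_le θ ρ hle T).trans hT.le
  · rw [← integral_sub hint (integrable_continuousMap _)]
    simp only [ContinuousMap.coe_mk, hdiff]
    refine (norm_integral_le_of_norm_le ?_ (Eventually.of_forall hle)).trans hN.le
    exact (continuous_tent N).integrable_of_hasCompactSupport (HasCompactSupport.of_compactSpace _)

/-! ### The sawtooth function -/

lemma periodizedBernoulli_one_coe (x : ℝ) :
    periodizedBernoulli 1 (x : UnitAddCircle) = Int.fract x - 1 / 2 := by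
  have hx : (x : UnitAddCircle) = ((Int.fract x : ℝ) : UnitAddCircle) := by
    rw [← sub_eq_zero, ← AddCircle.coe_sub, AddCircle.coe_eq_zero_iff]
    exact ⟨⌊x⌋, by simp [Int.self_sub_fract]⟩
  rw [hx, periodizedBernoulli, AddCircle.liftIco_zero_coe_apply
    ⟨Int.fract_nonneg x, Int.fract_lt_one x⟩, bernoulliFun_one]

lemma continuousAt_periodizedBernoulli_one {x : UnitAddCircle} (hx : x ≠ 0) :
    ContinuousAt (periodizedBernoulli 1) x := by
  have h : ContinuousAt (AddCircle.equivIco (1 : ℝ) 0) x :=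
    AddCircle.continuousAt_equivIco 1 0 (by simpa using hx)
  exact (contDiff_bernoulliFun (k := 1)).continuous.continuousAt.comp
    (continuousAt_subtype_val.comp h)

/-- The averages of the sawtooth function twisted by a nontrivial character. -/
lemma orbitAvg_bernoulli {θ : ℝ} (ρ : ℝ) (hθ : Irrational θ) (Q : ℤ) :
    Tendsto (orbitAvg θ ρ fun x => fourier Q x * (periodizedBernoulli 1 x : ℂ)) atTop
      (𝓝 (1 / (2 * (Real.pi : ℂ) * Complex.I * (Q : ℂ)))) := by
  have hcoeff := fourierCoeff_bernoulli_eq one_ne_zero (-Q)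
  simp only [fourierCoeff, neg_neg, smul_eq_mul, Function.comp_apply] at hcoeff
  have hval : (1 : ℂ) / (2 * (Real.pi : ℂ) * Complex.I * (Q : ℂ)) =
      ∫ x : UnitAddCircle, fourier Q x * (periodizedBernoulli 1 x : ℂ) ∂haarAddCircle := by
    rw [hcoeff]
    push_cast
    simp [neg_div_neg_eq]
  rw [hval]
  refine orbitAvg_of_continuousAt ρ hθ (fun x => ?_) fun x hx => ?_
  · rw [norm_mul, fourier_apply, Circle.norm_coe, one_mul, Complex.norm_real]
    obtain ⟨y, rfl⟩ := QuotientAddGroup.mk_surjective x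
    have h := periodizedBernoulli_one_coe y
    have h1 := Int.fract_nonneg y
    have h2 := Int.fract_lt_one y
    rw [Real.norm_eq_abs, abs_le]
    constructor <;> linarith
  · exact (fourier Q).continuous.continuousAt.mul
      (Complex.continuous_ofReal.continuousAt.comp (continuousAt_periodizedBernoulli_one hx))

end WeylAverage

open WeylAverage

/-- **Weyl-type averages (from the proof of Proposition 6.1).**
Let `θ` be irrational with `0 < θ < 1` and let `0 ≤ ρ < 1`.  Then, for all integers
`p, q` with `q ≠ 0`,
`(1/t) ∑_{n=1}^t {nθ+ρ} e^{2πin(qθ+p)} → e^{-2πiqρ}/(2πiq)` as `t → ∞`. -/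
theorem weyl_average_limit
    (θ ρ : ℝ) (hθ0 : 0 < θ) (hθ1 : θ < 1) (hρ0 : 0 ≤ ρ) (hρ1 : ρ < 1)
    (hθirr : Irrational θ) :
    ∀ P Q : ℤ, Q ≠ 0 →
      Tendsto (fun T : ℕ => (1 / (T : ℂ)) *
          ∑ n ∈ Finset.Icc 1 T, ((Int.fract ((n : ℝ) * θ + ρ) : ℝ) : ℂ) *
            Complex.exp (2 * (Real.pi : ℂ) * Complex.I * (n : ℂ) *
              ((Q : ℂ) * (θ : ℂ) + (P : ℂ))))
        atTop
        (nhds (Complex.exp (-(2 * (Real.pi : ℂ) * Complex.I * (Q : ℂ) * (ρ : ℂ))) /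
          (2 * (Real.pi : ℂ) * Complex.I * (Q : ℂ)))) := by
  intro P Q hQ
  -- `{x} = B₁({x}) + 1/2`, and the constant does not contribute because `Q ≠ 0`.
  have h := (((orbitAvg_bernoulli ρ hθirr Q).add
    ((orbitAvg_fourier ρ hθirr hQ).const_mul (1 / 2))).const_mul
      (Complex.exp (-(2 * (Real.pi : ℂ) * Complex.I * (Q : ℂ) * (ρ : ℂ)))))
  rw [mul_zero, add_zero, mul_one_div] at h
  refine h.congr fun T => ?_
  rw [← orbitAvg_const_mul θ ρ (1 / 2), ← orbitAvg_add, ← orbitAvg_const_mul]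
  unfold orbitAvg
  congr 1
  refine Finset.sum_congr rfl fun n _ => ?_
  have hexp : Complex.exp (2 * (Real.pi : ℂ) * Complex.I * (n : ℂ) *
        ((Q : ℂ) * (θ : ℂ) + (P : ℂ))) =
      Complex.exp (-(2 * (Real.pi : ℂ) * Complex.I * (Q : ℂ) * (ρ : ℂ))) *
        fourier Q (((n : ℝ) * θ + ρ : ℝ) : UnitAddCircle) := by
    rw [fourier_coe_apply, ← Complex.exp_add, Complex.exp_eq_exp_iff_exists_int]
    refine ⟨n * P, ?_⟩
    push_cast
    ring
  beta_reduce
  rw [hexp, periodizedBernoulli_one_coe]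
  push_cast
  ring
end
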